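/- For every natural number d, the constant term of f₃^(2d), i.e., the coefficient of the monomial x⁰y⁰z⁰ in the (2d)-th power of the Laurent polynomial f₃ = z(3 + x + xy + y + x⁻¹ + x⁻¹y⁻¹ + y⁻¹) + z⁻¹, equals the sum over all triples of natural numbers (l,m,n) with l + m + n = d of (2d)! / ((l!)² · (m!)² · (n!)²). (Together with the vanishing of odd constant terms, this says that the classical period of f₃ equals the regularised quantum period of ℙ¹ × ℙ¹ × ℙ¹.) -/

import Mathlib

noncomputable section

open scoped Nat

/-- The Laurent polynomial ring in three variables over `ℚ`:
the group algebra `ℚ[ℤ³]`, where `x^i y^j z^k` corresponds to `(i,j,k)`. -/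
abbrev LaurentQ3 : Type := AddMonoidAlgebra ℚ (ℤ × ℤ × ℤ)

/-- The variable `x`. -/
def X : LaurentQ3 := AddMonoidAlgebra.single (1, 0, 0) 1
/-- The variable `y`. -/
def Y : LaurentQ3 := AddMonoidAlgebra.single (0, 1, 0) 1
/-- The variable `z`. -/
def Z : LaurentQ3 := AddMonoidAlgebra.single (0, 0, 1) 1
/-- The inverse variable `x⁻¹`. -/
def Xinv : LaurentQ3 := AddMonoidAlgebra.single (-1, 0, 0) 1
/-- The inverse variable `y⁻¹`. -/
def Yinv : LaurentQ3 := AddMonoidAlgebra.single (0, -1, 0) 1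
/-- The inverse variable `z⁻¹`. -/
def Zinv : LaurentQ3 := AddMonoidAlgebra.single (0, 0, -1) 1

/-- The Laurent polynomial `f_a = z(a + x + xy + y + x⁻¹ + x⁻¹y⁻¹ + y⁻¹) + z⁻¹`. -/
def f (a : ℚ) : LaurentQ3 :=
  Z * (AddMonoidAlgebra.single 0 a + X + X * Y + Y + Xinv + Xinv * Yinv + Yinv) + Zinv

/-! The hexagon polynomial factors as
`3 + x + xy + y + x⁻¹ + x⁻¹y⁻¹ + y⁻¹ = (1 + x + y⁻¹)(1 + x⁻¹ + y) = p · p*`, where `p*` is `p` with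
all exponents negated, so `f₃ = z p p* + z⁻¹`. Counting powers of `z`, the constant term of
`f₃ ^ (2d)` is `(2d choose d)` times that of `p ^ d · (p ^ d)*`, and the latter is the sum of the
squares of the coefficients of `p ^ d`. These coefficients are the multinomial coefficients of `d`,
because the three exponents of `p` are affinely independent. -/

section MultinomialSquares

open Finset AddMonoidAlgebra

variable {ι R G : Type*}

lemma sum_single_pow [DecidableEq ι] [CommSemiring R] [AddCommMonoid G] (s : Finset ι)
    (v : ι → G) (c : ι → R) (k : ℕ) :
    (∑ i ∈ s, single (v i) (c i) : AddMonoidAlgebra R G) ^ k =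
      ∑ t ∈ s.piAntidiag k,
        single (∑ i ∈ s, t i • v i) (Nat.multinomial s t * ∏ i ∈ s, c i ^ t i) := by
  simp only [sum_pow_eq_sum_piAntidiag, single_pow, prod_single, ← nsmul_eq_mul, smul_single]

lemma coeff_zero_sum_single_mul_sum_single_neg [Semiring R] [AddGroup G]
    {s : Finset ι} {v : ι → G} (hv : Set.InjOn v s) (a b : ι → R) :
    ((∑ i ∈ s, single (v i) (a i)) * ∑ i ∈ s, single (-v i) (b i) : AddMonoidAlgebra R G).coeff 0 =
      ∑ i ∈ s, a i * b i := by
  classical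
  simp only [sum_mul_sum, single_mul_single, coeff_sum, Finsupp.finsetSum_apply,
    coeff_single, Finsupp.single_apply, add_neg_eq_zero]
  refine sum_congr rfl fun i hi => ?_
  rw [sum_eq_single_of_mem i hi fun j hj hji => if_neg fun hij => hji (hv hi hj hij).symm,
    if_pos rfl]

lemma coeff_zero_sum_single_pow_mul_sum_single_neg_pow [DecidableEq ι] [CommSemiring R]
    [AddCommGroup G] {s : Finset ι} {v : ι → G} {k : ℕ}
    (hv : Set.InjOn (fun t : ι → ℕ => ∑ i ∈ s, t i • v i) (s.piAntidiag k)) (a b : ι → R) :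
    ((∑ i ∈ s, single (v i) (a i)) ^ k * (∑ i ∈ s, single (-v i) (b i)) ^ k :
        AddMonoidAlgebra R G).coeff 0 =
      ∑ t ∈ s.piAntidiag k, (Nat.multinomial s t : R) ^ 2 * ∏ i ∈ s, (a i * b i) ^ t i := by
  rw [sum_single_pow, sum_single_pow]
  simp only [smul_neg, sum_neg_distrib]
  rw [coeff_zero_sum_single_mul_sum_single_neg hv]
  simp only [mul_pow, prod_mul_distrib]
  exact sum_congr rfl fun t _ => by ring

end MultinomialSquares

section Grading

open Finset AddMonoidAlgebra

variable {R M : Type*} [CommSemiring R]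

lemma coeff_eq_zero_of_mem_gradeBy {ι : Type*} {deg : M → ι} {i : ι} {p : AddMonoidAlgebra R M}
    (hp : p ∈ gradeBy R deg i) {m : M} (hm : deg m ≠ i) : p.coeff m = 0 :=
  Finsupp.notMem_support_iff.mp fun hmem => hm (hp m hmem)

lemma coeff_zero_add_pow_two_mul [AddCommMonoid M] {deg : M →+ ℤ} {p q : AddMonoidAlgebra R M}
    (hp : p ∈ gradeBy R deg 1) (hq : q ∈ gradeBy R deg (-1)) (d : ℕ) :
    ((p + q) ^ (2 * d)).coeff 0 = Nat.centralBinom d * ((p * q) ^ d).coeff 0 := by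
  have off_diagonal (k : ℕ) (hk : k ∈ range (2 * d + 1)) (hkd : k ≠ d) :
      ((2 * d).choose k • (p ^ k * q ^ (2 * d - k))).coeff 0 = 0 := by
    have hmem : p ^ k * q ^ (2 * d - k) ∈ gradeBy R deg (k • 1 + (2 * d - k) • -1) :=
      SetLike.mul_mem_graded (SetLike.pow_mem_graded k hp) (SetLike.pow_mem_graded _ hq)
    have hdeg : deg 0 ≠ k • 1 + (2 * d - k) • -1 := by
      rw [mem_range] at hk
      simp only [map_zero, nsmul_eq_mul]
      omega
    rw [coeff_smul_apply, coeff_eq_zero_of_mem_gradeBy hmem hdeg, smul_zero]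
  simp only [add_pow, ← nsmul_eq_mul', coeff_sum, Finsupp.finsetSum_apply]
  rw [sum_eq_single_of_mem d (mem_range.mpr (by omega)) off_diagonal, coeff_smul_apply,
    nsmul_eq_mul, ← Nat.centralBinom_eq_two_mul_choose, mul_pow, two_mul, Nat.add_sub_cancel]

end Grading

lemma centralBinom_mul_multinomial_sq {ι K : Type*} [Field K] [CharZero K] (s : Finset ι)
    (t : ι → ℕ) :
    (Nat.centralBinom (∑ i ∈ s, t i) * Nat.multinomial s t ^ 2 : K) =
      (2 * ∑ i ∈ s, t i)! / ∏ i ∈ s, ((t i)! : K) ^ 2 := by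
  have hchoose := Nat.choose_mul_factorial_mul_factorial
    (Nat.le_mul_of_pos_left (∑ i ∈ s, t i) two_pos)
  rw [← Nat.centralBinom_eq_two_mul_choose, two_mul, Nat.add_sub_cancel, ← two_mul,
    ← Nat.multinomial_spec] at hchoose
  have hprod : ∏ i ∈ s, ((t i)! : K) ^ 2 ≠ 0 :=
    Finset.prod_ne_zero_iff.mpr fun i _ =>
      pow_ne_zero 2 (Nat.cast_ne_zero.mpr (t i).factorial_ne_zero)
  rw [eq_div_iff hprod, ← hchoose, Finset.prod_pow]
  push_cast
  ring

section Triangle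

open Finset AddMonoidAlgebra

/-- The exponents of the monomials `1`, `x`, `y⁻¹`. The hexagon formed by the exponents of
`x, xy, y, x⁻¹, x⁻¹y⁻¹, y⁻¹` is the difference body of the triangle they span. -/
def triangleVertex : Fin 3 → ℤ × ℤ × ℤ :=
  ![0, (1, 0, 0), (0, -1, 0)]

/-- The trinomial `1 + x + y⁻¹`. -/
def triangle : LaurentQ3 :=
  ∑ i, single (triangleVertex i) 1

/-- The trinomial `1 + x⁻¹ + y`, which is `triangle` with all exponents negated. -/
def triangleNeg : LaurentQ3 :=
  ∑ i, single (-triangleVertex i) 1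

/-- The degree in `z` of a monomial. -/
def zDegree : ℤ × ℤ × ℤ →+ ℤ :=
  (AddMonoidHom.snd ℤ ℤ).comp (AddMonoidHom.snd ℤ (ℤ × ℤ))

lemma X_mul_Xinv : X * Xinv = 1 := by
  rw [X, Xinv, single_mul_single, mul_one]
  rfl

lemma Y_mul_Yinv : Y * Yinv = 1 := by
  rw [Y, Yinv, single_mul_single, mul_one]
  rfl

lemma Z_mul_Zinv : Z * Zinv = 1 := by
  rw [Z, Zinv, single_mul_single, mul_one]
  rfl

lemma triangle_eq : triangle = 1 + X + Yinv :=
  Fin.sum_univ_three _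

lemma triangleNeg_eq : triangleNeg = 1 + Xinv + Y :=
  Fin.sum_univ_three _

lemma f_three_eq : f 3 = Z * (triangle * triangleNeg) + Zinv := by
  have single_zero_three : (single 0 3 : LaurentQ3) = 3 := rfl
  rw [f, single_zero_three, triangle_eq, triangleNeg_eq]
  linear_combination (-Z) * X_mul_Xinv - Z * Y_mul_Yinv

lemma zDegree_triangleVertex (i : Fin 3) : zDegree (triangleVertex i) = 0 := by
  fin_cases i <;> rfl

lemma Z_mul_triangle_mul_triangleNeg_mem_gradeBy :
    Z * (triangle * triangleNeg) ∈ gradeBy ℚ zDegree 1 := by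
  have htriangle : triangle ∈ gradeBy ℚ zDegree 0 := sum_mem fun i _ => by
    simpa only [zDegree_triangleVertex] using single_mem_gradeBy zDegree (triangleVertex i) (1 : ℚ)
  have htriangleNeg : triangleNeg ∈ gradeBy ℚ zDegree 0 := sum_mem fun i _ => by
    simpa only [map_neg, zDegree_triangleVertex, neg_zero] using
      single_mem_gradeBy zDegree (-triangleVertex i) (1 : ℚ)
  exact SetLike.mul_mem_graded (single_mem_gradeBy zDegree (0, 0, 1) 1)
    (SetLike.mul_mem_graded htriangle htriangleNeg)

lemma Zinv_mem_gradeBy : Zinv ∈ gradeBy ℚ zDegree (-1) :=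
  single_mem_gradeBy zDegree (0, 0, -1) 1

lemma injOn_sum_smul_triangleVertex (k : ℕ) :
    Set.InjOn (fun t : Fin 3 → ℕ => ∑ i, t i • triangleVertex i)
      (univ.piAntidiag k : Finset (Fin 3 → ℕ)) := by
  intro s hs t ht hst
  have hx : s 1 = t 1 := by
    simpa [Fin.sum_univ_three, triangleVertex] using congr_arg Prod.fst hst
  have hy : s 2 = t 2 := by
    simpa [Fin.sum_univ_three, triangleVertex] using congr_arg (fun v => v.2.1) hst
  have hsum : ∑ i, s i = ∑ i, t i :=
    (mem_piAntidiag.mp hs).1.trans (mem_piAntidiag.mp ht).1.symm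
  simp only [Fin.sum_univ_three] at hsum
  ext i
  fin_cases i
  exacts [by simp only [Fin.zero_eta]; omega, hx, hy]

lemma coeff_zero_triangle_pow_mul_triangleNeg_pow (d : ℕ) :
    (triangle ^ d * triangleNeg ^ d).coeff 0 =
      ∑ t ∈ Finset.Nat.antidiagonalTuple 3 d, (Nat.multinomial univ t : ℚ) ^ 2 := by
  rw [triangle, triangleNeg,
    coeff_zero_sum_single_pow_mul_sum_single_neg_pow (injOn_sum_smul_triangleVertex d),
    piAntidiag_univ_fin_eq_antidiagonalTuple]
  simp only [mul_one, one_pow, prod_const_one]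

end Triangle

/-- The constant term of `f₃ ^ (2d)` equals
`∑_{l+m+n=d} (2d)! / ((l!)² · (m!)² · (n!)²)`. -/
theorem constant_term_f_three_even_power (d : ℕ) :
    (f 3 ^ (2 * d)).coeff (0, 0, 0) =
      ∑ t ∈ Finset.Nat.antidiagonalTuple 3 d,
        (((2 * d)! : ℕ) : ℚ) /
          (((t 0)! : ℚ) ^ 2 * ((t 1)! : ℚ) ^ 2 * ((t 2)! : ℚ) ^ 2) := by
  have hcancel : Z * (triangle * triangleNeg) * Zinv = triangle * triangleNeg := by
    rw [mul_right_comm, Z_mul_Zinv, one_mul]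
  rw [← Prod.zero_eq_mk, ← Prod.zero_eq_mk, f_three_eq, coeff_zero_add_pow_two_mul
      Z_mul_triangle_mul_triangleNeg_mem_gradeBy Zinv_mem_gradeBy,
    hcancel, mul_pow, coeff_zero_triangle_pow_mul_triangleNeg_pow, Finset.mul_sum]
  refine Finset.sum_congr rfl fun t ht => ?_
  have hfactorial := centralBinom_mul_multinomial_sq (K := ℚ) Finset.univ t
  rwa [Finset.Nat.mem_antidiagonalTuple.mp ht, Fin.prod_univ_three] at hfactorial

end
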